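/- Assume dom h has diameter at most D > 0 and M_f > 0. Set B := 8 + 12·log(1 + L_f²D²N̄/(16M_f²)) and U(ε̄) := 4(M_f² + ε̄L_f)B/(1−χ)² + N̄ε̄/λ₀. Then: (a) every stepsize λ used by U-PB (in particular every λ_k set at a serious update) satisfies λ ≥ min{ (1−χ)²N̄ε̄/(4(M_f² + ε̄L_f)B), λ₀ }, and hence λ ≥ N̄ε̄/U(ε̄); and (b) the total number of reset updates performed by U-PB is at most ⌈2·log(λ₀U(ε̄)/(N̄ε̄))⌉. -/

import Mathlib

open scoped RealInnerProductSpace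

section aux
variable {E : Type*} [NormedAddCommGroup E] [InnerProductSpace ℝ E]

/-- If `a ≤ b + κ / (m+1)` for all `m`, then `a ≤ b`. -/
theorem upb_limit_aux (a b κ : ℝ) (H : ∀ m : ℕ, a ≤ b + κ / ((m : ℝ) + 1)) : a ≤ b := by
  have h1 : Filter.Tendsto (fun m : ℕ => b + κ / ((m : ℝ) + 1)) Filter.atTop (nhds (b + 0)) := by
    apply Filter.Tendsto.add tendsto_const_nhds
    have := (tendsto_one_div_add_atTop_nhds_zero_nat (𝕜 := ℝ)).const_mul κ
    simpa [div_eq_mul_inv] using this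
  have := ge_of_tendsto' h1 H
  simpa using this

/-- Quadratic growth at the minimizer of a prox subproblem. -/
theorem upb_prox_growth (G : E → ℝ) (S : Set E) (hG : ConvexOn ℝ S G) (c x u : E) (lam : ℝ)
    (hlam : 0 < lam) (hx : x ∈ S) (hu : u ∈ S)
    (hmin : ∀ z ∈ S, G x + ‖x - c‖ ^ 2 / (2 * lam) ≤ G z + ‖z - c‖ ^ 2 / (2 * lam)) :
    G x + ‖x - c‖ ^ 2 / (2 * lam) + ‖u - x‖ ^ 2 / (2 * lam)
      ≤ G u + ‖u - c‖ ^ 2 / (2 * lam) := by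
  apply upb_limit_aux _ _ (‖u - x‖ ^ 2 / (2 * lam))
  intro m
  set θ : ℝ := 1 / ((m : ℝ) + 1) with hθ
  have hm : (0 : ℝ) < (m : ℝ) + 1 := by positivity
  have hθ0 : 0 < θ := by positivity
  have hθ1 : θ ≤ 1 := by
    rw [hθ, div_le_one hm]; linarith [(Nat.cast_nonneg m : (0 : ℝ) ≤ m)]
  have hz := hG.1 hx hu (sub_nonneg.2 hθ1) hθ0.le (by ring)
  have hc := hG.2 hx hu (sub_nonneg.2 hθ1) hθ0.le (by ring)
  have hm1 := hmin _ hz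
  have hid : ‖(1 - θ) • x + θ • u - c‖ ^ 2
      = (1 - θ) * ‖x - c‖ ^ 2 + θ * ‖u - c‖ ^ 2 - θ * (1 - θ) * ‖u - x‖ ^ 2 := by
    have e1 : (1 - θ) • x + θ • u - c = (x - c) + θ • ((u - c) - (x - c)) := by module
    have e2 : u - x = (u - c) - (x - c) := by abel
    rw [e1, e2]
    generalize x - c = p
    generalize u - c = r
    rw [norm_add_sq_real, norm_smul, inner_smul_right, inner_sub_right, mul_pow,
      norm_sub_sq_real, real_inner_self_eq_norm_sq, real_inner_comm p r]
    simp only [Real.norm_eq_abs, sq_abs]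
    ring
  rw [hid] at hm1
  simp only [smul_eq_mul] at hc
  have hk : ‖u - x‖ ^ 2 / (2 * lam) / ((m : ℝ) + 1) = θ * (‖u - x‖ ^ 2 / (2 * lam)) := by
    rw [hθ]; ring
  rw [hk]
  have hexp : ((1 - θ) * ‖x - c‖ ^ 2 + θ * ‖u - c‖ ^ 2 - θ * (1 - θ) * ‖u - x‖ ^ 2) / (2 * lam)
      = (1 - θ) * (‖x - c‖ ^ 2 / (2 * lam)) + θ * (‖u - c‖ ^ 2 / (2 * lam))
        - θ * (1 - θ) * (‖u - x‖ ^ 2 / (2 * lam)) := by ring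
  rw [hexp] at hm1
  have : θ * (G x + ‖x - c‖ ^ 2 / (2 * lam) + ‖u - x‖ ^ 2 / (2 * lam))
      ≤ θ * (G u + ‖u - c‖ ^ 2 / (2 * lam) + θ * (‖u - x‖ ^ 2 / (2 * lam))) := by
    nlinarith
  exact le_of_mul_le_mul_left this hθ0

/-- Hybrid descent inequality. -/
theorem upb_descent (f : E → ℝ) (f' : E → E) (S : Set E) (hS : Convex ℝ S) (M L : ℝ)
    (horacle : ∀ x ∈ S, ∀ u ∈ S, f x + ⟪f' x, u - x⟫ ≤ f u)
    (hhybrid : ∀ x ∈ S, ∀ y ∈ S, ‖f' x - f' y‖ ≤ 2 * M + L * ‖x - y‖)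
    (x y : E) (hx : x ∈ S) (hy : y ∈ S) :
    f y - f x - ⟪f' x, y - x⟫ ≤ 2 * M * ‖y - x‖ + L * ‖y - x‖ ^ 2 / 2 := by
  set r := ‖y - x‖ with hr
  have hr0 : 0 ≤ r := norm_nonneg _
  apply upb_limit_aux _ _ (L * r ^ 2 / 2)
  intro m
  set n : ℝ := (m : ℝ) + 1 with hn
  have hn0 : 0 < n := by positivity
  let p : ℕ → E := fun i => x + ((i : ℝ) / n) • (y - x)
  have hp : ∀ i : ℕ, i ≤ m + 1 → p i ∈ S := by
    intro i hi
    have h1 : (i : ℝ) / n ≤ 1 := by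
      rw [div_le_one hn0, hn]; exact_mod_cast hi
    exact hS.add_smul_sub_mem hx hy ⟨by positivity, h1⟩
  have key : ∀ k : ℕ, k ≤ m + 1 →
      f (p k) - f x - ((k : ℝ) / n) * ⟪f' x, y - x⟫
        ≤ 2 * M * r * (k / n) + L * r ^ 2 * (k * (k + 1)) / (2 * n ^ 2) := by
    intro k
    induction k with
    | zero => intro _; simp [p]
    | succ k ih =>
      intro hk
      have ih := ih (by omega)
      have h1 := horacle _ (hp (k + 1) hk) _ (hp k (by omega))
      have e1 : p k - p (k + 1) = (-(1 / n)) • (y - x) := by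
        simp only [p]; push_cast
        rw [add_sub_add_left_eq_sub, ← sub_smul]; congr 1; ring
      have e2 : p (k + 1) - x = (((k : ℝ) + 1) / n) • (y - x) := by
        simp [p]
      have h2 := hhybrid _ (hp (k + 1) hk) _ hx
      rw [e2, norm_smul, Real.norm_of_nonneg (by positivity), ← hr] at h2
      rw [e1, inner_smul_right] at h1
      have h3 : ⟪f' (p (k + 1)) - f' x, y - x⟫ ≤ (2 * M + L * (((k : ℝ) + 1) / n * r)) * r :=
        (real_inner_le_norm _ _).trans (mul_le_mul_of_nonneg_right h2 hr0)
      rw [inner_sub_left] at h3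
      have h4 : (1 / n) * (⟪f' (p (k + 1)), y - x⟫ - ⟪f' x, y - x⟫)
          ≤ (1 / n) * ((2 * M + L * (((k : ℝ) + 1) / n * r)) * r) :=
        mul_le_mul_of_nonneg_left h3 (by positivity)
      have e3 : 2 * M * r * (((k + 1 : ℕ) : ℝ) / n)
            + L * r ^ 2 * (((k + 1 : ℕ) : ℝ) * (((k + 1 : ℕ) : ℝ) + 1)) / (2 * n ^ 2)
          = 2 * M * r * (k / n) + L * r ^ 2 * (k * (k + 1)) / (2 * n ^ 2)
            + (1 / n) * ((2 * M + L * (((k : ℝ) + 1) / n * r)) * r) := by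
        push_cast; field_simp; ring
      have e4 : (((k + 1 : ℕ) : ℝ) / n) = (k : ℝ) / n + 1 / n := by push_cast; ring
      rw [e3, e4]
      nlinarith
  have := key (m + 1) le_rfl
  have e5 : (((m + 1 : ℕ) : ℝ)) = n := by push_cast; rfl
  have e6 : p (m + 1) = y := by simp only [p]; rw [e5, div_self hn0.ne']; simp
  rw [e6, e5, div_self hn0.ne'] at this
  have e7 : L * r ^ 2 * (n * (n + 1)) / (2 * n ^ 2) = L * r ^ 2 / 2 + L * r ^ 2 / 2 / n := by
    field_simp
  rw [e7] at this
  linarith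

/-- Real-number part of the three-point inequality. -/
theorem upb_three_point_real (P Q A A' M L r1 r2 R : ℝ) (hM : 0 ≤ M) (hL : 0 ≤ L)
    (hr10 : 0 ≤ r1) (hr20 : 0 ≤ r2) (hR : 0 ≤ R) (hRR : R ^ 2 = r1 ^ 2 + r2 ^ 2)
    (hA : 0 ≤ A) (hA' : 0 ≤ A') (hpar : P ^ 2 + Q ^ 2 = 2 * (A ^ 2 + A' ^ 2))
    (hna : A ≤ 2 * M + L * r1) (hnb : A' ≤ 2 * M + L * (r1 + r2)) :
    P * r1 + Q * r2 ≤ 4 * M * R + 7 / 3 * L * R ^ 2 := by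
  have hrr : 0 ≤ 4 * M * R + 7 / 3 * L * R ^ 2 := by positivity
  apply le_of_sq_le_sq _ hrr
  have hcs : (P * r1 + Q * r2) ^ 2
      ≤ (P ^ 2 + Q ^ 2) * (r1 ^ 2 + r2 ^ 2) := by
    nlinarith [sq_nonneg (P * r2 - Q * r1)]
  rw [hpar, ← hRR] at hcs
  refine hcs.trans ?_
  have ha2 : A ^ 2 ≤ (2 * M + L * r1) ^ 2 := by gcongr
  have hb2 : A' ^ 2 ≤ (2 * M + L * (r1 + r2)) ^ 2 := by gcongr
  have hs : 2 * r1 + r2 ≤ 7 / 3 * R := by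
    apply le_of_sq_le_sq _ (by positivity)
    nlinarith [sq_nonneg (r1 - 2 * r2)]
  have hq : r1 ^ 2 + (r1 + r2) ^ 2 ≤ 49 / 18 * R ^ 2 := by
    rw [hRR]; nlinarith [sq_nonneg (13 * r1 - 18 * r2)]
  have hfin : 2 * (A ^ 2 + A' ^ 2) ≤ (4 * M + 7 / 3 * L * R) ^ 2 := by
    have e1 : M * L * (2 * r1 + r2) ≤ M * L * (7 / 3 * R) :=
      mul_le_mul_of_nonneg_left hs (by positivity)
    have e2 : L ^ 2 * (r1 ^ 2 + (r1 + r2) ^ 2) ≤ L ^ 2 * (49 / 18 * R ^ 2) :=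
      mul_le_mul_of_nonneg_left hq (by positivity)
    nlinarith
  calc 2 * (A ^ 2 + A' ^ 2) * R ^ 2 ≤ (4 * M + 7 / 3 * L * R) ^ 2 * R ^ 2 := by gcongr
    _ = _ := by ring

/-- Three-point inequality for two consecutive steps. -/
theorem upb_three_point (f : E → ℝ) (f' : E → E) (S : Set E) (M L : ℝ) (hM : 0 ≤ M) (hL : 0 ≤ L)
    (horacle : ∀ x ∈ S, ∀ u ∈ S, f x + ⟪f' x, u - x⟫ ≤ f u)
    (hhybrid : ∀ x ∈ S, ∀ y ∈ S, ‖f' x - f' y‖ ≤ 2 * M + L * ‖x - y‖)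
    (x y z : E) (hx : x ∈ S) (hy : y ∈ S) (hz : z ∈ S) (R : ℝ) (hR : 0 ≤ R)
    (hRR : R ^ 2 = ‖y - x‖ ^ 2 + ‖z - y‖ ^ 2) :
    2 * (f y - f x - ⟪f' x, y - x⟫) + (f z - f y - ⟪f' y, z - y⟫)
      ≤ 4 * M * R + 7 / 3 * L * R ^ 2 := by
  have h1 := horacle y hy x hx
  have h2 := horacle z hz x hx
  set a := f' y - f' x with ha
  set b := f' z - f' x with hb
  set r1 := ‖y - x‖ with hr1
  set r2 := ‖z - y‖ with hr2
  have hr10 : 0 ≤ r1 := norm_nonneg _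
  have hr20 : 0 ≤ r2 := norm_nonneg _
  have hna : ‖a‖ ≤ 2 * M + L * r1 := hhybrid y hy x hx
  have hnb : ‖b‖ ≤ 2 * M + L * (r1 + r2) := by
    refine (hhybrid z hz x hx).trans ?_
    have : ‖z - x‖ ≤ r1 + r2 := by
      have e : z - x = (y - x) + (z - y) := by abel
      rw [e]; exact norm_add_le _ _
    nlinarith
  have h3 : 2 * (f y - f x - ⟪f' x, y - x⟫) + (f z - f y - ⟪f' y, z - y⟫)
      ≤ ⟪a + b, y - x⟫ + ⟪b - a, z - y⟫ := by
    have e1 : x - y = -(y - x) := by abel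
    have e2 : x - z = -((y - x) + (z - y)) := by abel
    rw [e1, inner_neg_right] at h1
    rw [e2, inner_neg_right, inner_add_right] at h2
    have e3 : b - a = f' z - f' y := by rw [ha, hb]; abel
    rw [e3, ha, hb, inner_add_left, inner_sub_left, inner_sub_left, inner_sub_left]
    linarith
  have h4 : ⟪a + b, y - x⟫ ≤ ‖a + b‖ * r1 := real_inner_le_norm _ _
  have h5 : ⟪b - a, z - y⟫ ≤ ‖b - a‖ * r2 := real_inner_le_norm _ _
  have hpar : ‖a + b‖ ^ 2 + ‖b - a‖ ^ 2 = 2 * (‖a‖ ^ 2 + ‖b‖ ^ 2) := by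
    clear_value a b
    rw [norm_add_sq_real, norm_sub_sq_real, real_inner_comm a b]; ring
  refine h3.trans ?_
  refine (add_le_add h4 h5).trans ?_
  exact upb_three_point_real _ _ _ _ M L r1 r2 R hM hL hr10 hr20 hR hRR (norm_nonneg _)
    (norm_nonneg _) hpar hna hnb

end aux

/-- Potential-function gain. -/
theorem upb_gain (κ lam M L t0 t1 r : ℝ) (hκ : 0 ≤ κ) (hκ2 : κ ≤ 2) (hlam : 0 < lam) (hL : 0 ≤ L)
    (ht1 : 0 < t1) (hdec : r ^ 2 / (2 * lam) ≤ t0 - t1)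
    (hkey : κ ≤ 32 / 9 * (r * M / t1) ^ 2 + 28 / 9 * (L * r ^ 2 / t1)) :
    κ ≤ 64 / 9 * (lam * M ^ 2) * (1 / t1 - 1 / t0)
      + (2 + 56 / 9 * (lam * L)) * (Real.log t0 - Real.log t1) := by
  have hr : 0 ≤ r ^ 2 / (2 * lam) := by positivity
  have ht0 : 0 < t0 := by linarith
  have hlog : 1 - t1 / t0 ≤ Real.log t0 - Real.log t1 := by
    rw [← Real.log_div ht0.ne' ht1.ne']
    have := Real.one_sub_inv_le_log_of_pos (div_pos ht0 ht1)
    rwa [inv_div] at this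
  have h1 : (2 + 56 / 9 * (lam * L)) * (1 - t1 / t0)
      ≤ (2 + 56 / 9 * (lam * L)) * (Real.log t0 - Real.log t1) :=
    mul_le_mul_of_nonneg_left hlog (by positivity)
  refine le_trans ?_ (add_le_add le_rfl h1)
  have h2 : 64 / 9 * (lam * M ^ 2) * (1 / t1 - 1 / t0) + (2 + 56 / 9 * (lam * L)) * (1 - t1 / t0)
      = ((t0 - t1) * (64 / 9 * (lam * M ^ 2) / t1 + 56 / 9 * (lam * L)) + 2 * (t0 - t1)) / t0 := by
    field_simp; ring
  rw [h2, le_div_iff₀ ht0]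
  have h3 : r ^ 2 / (2 * lam) * (64 / 9 * (lam * M ^ 2) / t1 + 56 / 9 * (lam * L))
      ≤ (t0 - t1) * (64 / 9 * (lam * M ^ 2) / t1 + 56 / 9 * (lam * L)) :=
    mul_le_mul_of_nonneg_right hdec (by positivity)
  have h4 : r ^ 2 / (2 * lam) * (64 / 9 * (lam * M ^ 2) / t1 + 56 / 9 * (lam * L))
      = t1 * (32 / 9 * (r * M / t1) ^ 2 + 28 / 9 * (L * r ^ 2 / t1)) := by
    field_simp; ring
  have h5 := mul_le_mul_of_nonneg_left hkey ht1.le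
  nlinarith

theorem upb_gain_single (lam M L t0 t1 r : ℝ) (hlam : 0 < lam) (hL : 0 ≤ L)
    (ht1 : 0 < t1) (hdec : r ^ 2 / (2 * lam) ≤ t0 - t1)
    (h : t1 ≤ 2 * M * r + L * r ^ 2 / 2) :
    8 / 9 ≤ 64 / 9 * (lam * M ^ 2) * (1 / t1 - 1 / t0)
      + (2 + 56 / 9 * (lam * L)) * (Real.log t0 - Real.log t1) := by
  apply upb_gain (8 / 9) lam M L t0 t1 r (by norm_num) (by norm_num) hlam hL ht1 hdec
  have h1 : 1 ≤ 2 * (r * M / t1) + (L * r ^ 2 / t1) / 2 := by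
    have : 2 * (r * M / t1) + (L * r ^ 2 / t1) / 2 = (2 * M * r + L * r ^ 2 / 2) / t1 := by
      field_simp
    rw [this, le_div_iff₀ ht1]; linarith
  have h2 : 0 ≤ L * r ^ 2 / t1 := by positivity
  nlinarith [sq_nonneg (r * M / t1 - 1 / 2)]

theorem upb_gain_pair (lam M L t0 t2 R : ℝ) (hlam : 0 < lam) (hL : 0 ≤ L)
    (ht2 : 0 < t2) (hdec : R ^ 2 / (2 * lam) ≤ t0 - t2)
    (h : 3 * t2 ≤ 4 * M * R + 7 / 3 * L * R ^ 2) :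
    2 ≤ 64 / 9 * (lam * M ^ 2) * (1 / t2 - 1 / t0)
      + (2 + 56 / 9 * (lam * L)) * (Real.log t0 - Real.log t2) := by
  apply upb_gain 2 lam M L t0 t2 R (by norm_num) (by norm_num) hlam hL ht2 hdec
  have h1 : 3 ≤ 4 * (R * M / t2) + 7 / 3 * (L * R ^ 2 / t2) := by
    have : 4 * (R * M / t2) + 7 / 3 * (L * R ^ 2 / t2)
        = (4 * M * R + 7 / 3 * L * R ^ 2) / t2 := by
      field_simp
    rw [this, le_div_iff₀ ht2]; linarith
  nlinarith [sq_nonneg (R * M / t2 - 3 / 4)]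

theorem upb_log_tangent (E k z : ℝ) (hE : 0 < E) (hz : 0 < z) (hk : Real.log E ≤ k) :
    Real.log z ≤ z / E - 1 + k := by
  have h1 := Real.log_le_sub_one_of_pos (div_pos hz hE)
  rw [Real.log_div hz.ne' hE.ne'] at h1
  linarith

theorem upb_log_le_of_pow (E : ℝ) (a b : ℕ) (hE : 0 < E) (hb : 0 < b)
    (h : E ^ b ≤ (2.7182818283 : ℝ) ^ a) : Real.log E ≤ a / b := by
  have hb' : (0 : ℝ) < b := by exact_mod_cast hb
  rw [le_div_iff₀ hb', mul_comm, ← Real.log_pow]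
  rw [Real.log_le_iff_le_exp (by positivity)]
  refine h.trans ?_
  rw [← mul_one (a : ℝ), Real.exp_nat_mul]
  gcongr
  exact Real.exp_one_gt_d9.le

/-- Numerical inequality, small `ν`. -/
theorem upb_num_small (μ ν Λ : ℝ) (hν : 0 ≤ ν) (hν4 : ν ≤ 1 / 4) (hΛ : 1 < Λ)
    (hb : Λ * (1 - ν) ≤ 2 * μ) :
    10 / 9 + 64 / 9 * μ * (1 - 1 / Λ) + (2 + 56 / 9 * ν) * Real.log Λ ≤ 8 * (μ + 2 * ν) := by
  have h8 : Real.log 8 ≤ (209 : ℕ) / (100 : ℕ) :=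
    upb_log_le_of_pow 8 209 100 (by norm_num) (by norm_num) (by norm_num)
  have h12 : Real.log 12 ≤ (249 : ℕ) / (100 : ℕ) :=
    upb_log_le_of_pow 12 249 100 (by norm_num) (by norm_num) (by norm_num)
  have l8 := upb_log_tangent 8 _ Λ (by norm_num) (by linarith) h8
  have l12 := upb_log_tangent 12 _ Λ (by norm_num) (by linarith) h12
  norm_num at l8 l12
  have hd : (1 - ν) / 2 ≤ μ * (1 / Λ) := by
    rw [mul_one_div, le_div_iff₀ (by linarith)]; linarith
  have a0 : 0 ≤ 4 * Λ + 22 - 18 * Real.log Λ := by linarith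
  have a1 : 0 ≤ 3 * Λ + 50 - 32 * Real.log Λ := by linarith
  have b0 := mul_nonneg (by linarith : (0 : ℝ) ≤ 1 - 4 * ν) a0
  have b1 := mul_nonneg (by linarith : (0 : ℝ) ≤ 4 * ν) a1
  nlinarith

/-- Core inequality in the large `ν` regime. -/
theorem upb_num_core (x w : ℝ) (hx : 0 < x) (hw : 0 < w) :
    16 * Real.log (x * (2 * w + w ^ 2 / 2))
      ≤ 13 + x + 27 / 2 * (x + 2) * Real.log (1 + w ^ 2 * (x + 2) / 8) := by
  set X := x + 2 with hX
  have hX0 : 0 < X := by linarith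
  set v := w ^ 2 * X / 8 with hv
  have hv0 : 0 < v := by positivity
  set z := x * (2 * w + w ^ 2 / 2) with hz
  have hz0 : 0 < z := by positivity
  rcases le_total v (1 / 2) with hle | hge
  · -- small v
    have hl : 4 / 5 * v ≤ Real.log (1 + v) := by
      have := Real.le_log_one_add_of_nonneg hv0.le
      refine le_trans ?_ this
      rw [le_div_iff₀ (by linarith)]; nlinarith
    have hz2 : z ^ 2 ≤ 58.7 * (x / X) ^ 2 * (X * v) := by
      -- w X ≤ 2 √2, indeed w^2 X ≤ 4 and X ≥ 2
      have hw2 : w ^ 2 * X ≤ 4 := by rw [hv] at hle; linarith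
      have hwle : w ^ 2 ≤ 2 := by nlinarith [sq_nonneg w]
      have hw15 : w ≤ 1.4143 := by nlinarith
      have e : 58.7 * (x / X) ^ 2 * (X * v) = x ^ 2 * w ^ 2 * (58.7 / 8) := by
        rw [hv]; field_simp
      rw [e, hz]
      have : (2 + w / 2) ^ 2 ≤ 58.7 / 8 := by nlinarith
      have := mul_le_mul_of_nonneg_left this (by positivity : 0 ≤ x ^ 2 * w ^ 2)
      nlinarith
    have hE : Real.log 43.5 ≤ (189 : ℕ) / (50 : ℕ) :=
      upb_log_le_of_pow 43.5 189 50 (by norm_num) (by norm_num) (by norm_num)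
    have hxX : Real.log (x / X) ≤ x / X - 1 := Real.log_le_sub_one_of_pos (by positivity)
    have hxX2 : x / X - 1 = - 2 / X := by rw [hX]; field_simp; ring
    have hxX0 : 0 < x / X := by positivity
    have h1 : Real.log (43.5 * (x / X) ^ 2) ≤ 3.78 + 2 * (- 2 / X) := by
      rw [Real.log_mul (by norm_num) (by positivity), Real.log_pow]
      push_cast at hE ⊢
      linarith
    have h2 := upb_log_tangent (43.5 * (x / X) ^ 2) _ (z ^ 2) (by positivity) (by positivity) h1
    have h3 : z ^ 2 / (43.5 * (x / X) ^ 2) ≤ 1.35 * (X * v) := by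
      rw [div_le_iff₀ (by positivity)]
      have : 0 ≤ (x / X) ^ 2 * (X * v) := by positivity
      nlinarith
    rw [Real.log_pow] at h2
    push_cast at h2
    have h4 : X * (4 / 5 * v) ≤ X * Real.log (1 + v) := mul_le_mul_of_nonneg_left hl hX0.le
    have h5 : 11.3 ≤ X + 32 / X := by
      have : X + 32 / X = (X ^ 2 + 32) / X := by field_simp
      rw [this, le_div_iff₀ hX0]
      nlinarith [sq_nonneg (X - 5.65)]
    have e6 : - 2 / X = - (1 / 16) * (32 / X) := by ring
    rw [e6] at h2
    nlinarith
  · -- large v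
    have hl : 2 / 5 ≤ Real.log (1 + v) := by
      have := Real.le_log_one_add_of_nonneg hv0.le
      refine le_trans ?_ this
      rw [le_div_iff₀ (by linarith)]; nlinarith
    have h5 : Real.log 5 ≤ (161 : ℕ) / (100 : ℕ) :=
      upb_log_le_of_pow 5 161 100 (by norm_num) (by norm_num) (by norm_num)
    have hzz : z ≤ (2 * x / 3 + 7 * x / X) * (1 + v) := by
      have e : (2 * x / 3 + 7 * x / X) * (1 + v) = x * ((2 / 3 + 7 / X) * (1 + v)) := by ring
      rw [e, hz]
      apply mul_le_mul_of_nonneg_left _ hx.le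
      have e2 : (2 / 3 + 7 / X) * (1 + v)
          = (2 / 3 * X + 7) / X + (2 / 3 * X + 7) * w ^ 2 / 8 := by
        rw [hv]; field_simp
      rw [e2]
      have e3 : 2 * w ≤ (2 / 3 * X + 3) / X + (2 / 3 * X + 3) * w ^ 2 / 8 := by
        rw [← sub_le_iff_le_add, le_div_iff₀ hX0]
        -- 2 w X ≤ (2X/3+3) (1 + w^2 X / 8)
        have : 8 * X ≤ (2 / 3 * X + 3) ^ 2 := by nlinarith [sq_nonneg (2 / 3 * X - 3)]
        have hs := sq_nonneg ((2 / 3 * X + 3) * w * (1 / 4) * 2 - 4)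
        have hp : 0 < 2 / 3 * X + 3 := by positivity
        have hmain : 0 ≤ (2 / 3 * X + 3) * ((2 / 3 * X + 3) * (1 + w ^ 2 * X / 8) - 2 * w * X) := by
          nlinarith [mul_nonneg hX0.le (sq_nonneg ((2 / 3 * X + 3) * w - 8))]
        have := nonneg_of_mul_nonneg_right hmain hp
        nlinarith
      have e4 : (2 / 3 * X + 7) / X + (2 / 3 * X + 7) * w ^ 2 / 8
          = (2 / 3 * X + 3) / X + (2 / 3 * X + 3) * w ^ 2 / 8 + 4 / X + w ^ 2 / 2 := by
        field_simp; ring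
      rw [e4]
      have : 0 ≤ 4 / X := by positivity
      linarith
    have hpos : 0 < 2 * x / 3 + 7 * x / X := by positivity
    have hlz : Real.log z ≤ Real.log (2 * x / 3 + 7 * x / X) + Real.log (1 + v) := by
      rw [← Real.log_mul hpos.ne' (by positivity)]
      exact Real.log_le_log hz0 hzz
    have ht := upb_log_tangent 5 _ _ (by norm_num) hpos h5
    norm_num at ht
    have hk : 7 * x / X * 3.2 ≤ 7.64 + 4.26 * x := by
      rw [div_mul_eq_mul_div, div_le_iff₀ hX0, hX]
      nlinarith [sq_nonneg (x - 0.7)]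
    have hll : (27 / 2 * X - 16) * (2 / 5) ≤ (27 / 2 * X - 16) * Real.log (1 + v) :=
      mul_le_mul_of_nonneg_left hl (by linarith)
    nlinarith

/-- Numerical inequality, large `ν`. -/
theorem upb_num_large (μ ν w Λ N B : ℝ) (hμ : 0 < μ) (hν4 : 1 / 4 ≤ ν) (hw : 0 < w) (hΛ : 1 < Λ)
    (hb : ν * Λ ≤ μ * (2 * w + w ^ 2 / 2)) (hN0 : 0 ≤ N)
    (hB : B = 8 + 12 * Real.log (1 + w ^ 2 * N / 16)) (hN : B * (μ + 2 * ν) ≤ N) :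
    10 / 9 + 64 / 9 * μ * (1 - 1 / Λ) + (2 + 56 / 9 * ν) * Real.log Λ ≤ B * (μ + 2 * ν) := by
  have hν : 0 < ν := by linarith
  set x := μ / ν with hx
  have hx0 : 0 < x := by positivity
  have hμx : μ = x * ν := by rw [hx]; field_simp
  have hΛx : Λ ≤ x * (2 * w + w ^ 2 / 2) := by
    rw [hμx] at hb
    have : ν * Λ ≤ ν * (x * (2 * w + w ^ 2 / 2)) := by linarith
    exact le_of_mul_le_mul_left this hν
  have hlΛ : Real.log Λ ≤ Real.log (x * (2 * w + w ^ 2 / 2)) :=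
    Real.log_le_log (by linarith) hΛx
  have hlΛ0 : 0 ≤ Real.log Λ := Real.log_nonneg hΛ.le
  have hcore := upb_num_core x w hx0 hw
  set l := Real.log (1 + w ^ 2 * N / 16) with hl
  have hl0 : 0 ≤ l := Real.log_nonneg (by
    have : 0 ≤ w ^ 2 * N / 16 := by positivity
    linarith)
  have hNν : 2 * (x + 2) ≤ N := by
    have : 8 * (μ + 2 * ν) ≤ B * (μ + 2 * ν) := by
      apply mul_le_mul_of_nonneg_right _ (by positivity); rw [hB]; linarith
    rw [hμx] at this hN
    nlinarith
  have hll : Real.log (1 + w ^ 2 * (x + 2) / 8) ≤ l := by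
    apply Real.log_le_log (by positivity)
    nlinarith [sq_nonneg w]
  have h1 : 64 / 9 * μ * (1 - 1 / Λ) ≤ 64 / 9 * μ := by
    have : 0 ≤ 1 / Λ := by positivity
    nlinarith
  have h2 : 10 / 9 + 2 * Real.log Λ ≤ 4 * ν * (10 / 9 + 2 * Real.log Λ) := by nlinarith
  have h3 : 16 * Real.log Λ ≤ 13 + x + 27 / 2 * (x + 2) * l := by
    have := mul_le_mul_of_nonneg_left hll (by positivity : 0 ≤ 27 / 2 * (x + 2))
    linarith
  have h4 := mul_le_mul_of_nonneg_left h3 hν.le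
  rw [hB]
  rw [hμx] at h1 ⊢
  nlinarith

theorem upb_num (μ ν w Λ N B : ℝ) (hμ : 0 < μ) (hν : 0 ≤ ν) (hw : 0 ≤ w) (hΛ : 1 < Λ)
    (hb1 : Λ * (1 - ν) ≤ 2 * μ)
    (hb : ν * Λ ≤ μ * (2 * w + w ^ 2 / 2)) (hN0 : 0 ≤ N)
    (hB : B = 8 + 12 * Real.log (1 + w ^ 2 * N / 16)) (hN : B * (μ + 2 * ν) ≤ N) :
    10 / 9 + 64 / 9 * μ * (1 - 1 / Λ) + (2 + 56 / 9 * ν) * Real.log Λ ≤ B * (μ + 2 * ν) := by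
  rcases le_total ν (1 / 4) with h | h
  · refine (upb_num_small μ ν Λ hν h hΛ hb1).trans ?_
    apply mul_le_mul_of_nonneg_right _ (by positivity)
    have : 0 ≤ Real.log (1 + w ^ 2 * N / 16) := Real.log_nonneg (by
      have : 0 ≤ w ^ 2 * N / 16 := by positivity
      linarith)
    rw [hB]; linarith
  · rcases hw.eq_or_lt with h0 | h0
    · exfalso; rw [← h0] at hb; nlinarith
    · exact upb_num_large μ ν w Λ N B hμ h h0 hΛ hb hN0 hB hN

section cyc
variable {E : Type*} [NormedAddCommGroup E] [InnerProductSpace ℝ E]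

set_option maxHeartbeats 2000000 in
/-- Analysis of one cycle of `n + 1` inner iterations with constant center and stepsize, all of
whose gaps exceed `(1-χ)ε/2` (here `q = 1 - χ`): the stepsize must be large. -/
theorem upb_cycle (f : E → ℝ) (f' : E → E) (S : Set E) (hS : Convex ℝ S) (M L : ℝ)
    (hM : 0 < M) (hL : 0 ≤ L)
    (horacle : ∀ x ∈ S, ∀ u ∈ S, f x + ⟪f' x, u - x⟫ ≤ f u)
    (hhybrid : ∀ x ∈ S, ∀ y ∈ S, ‖f' x - f' y‖ ≤ 2 * M + L * ‖x - y‖)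
    (D : ℝ) (hD : 0 < D) (hdiam : ∀ a ∈ S, ∀ b ∈ S, ‖a - b‖ ≤ D)
    (q ε lam : ℝ) (hq : 0 < q) (hq1 : q ≤ 1) (hε : 0 < ε) (hlam : 0 < lam)
    (c : E) (hc : c ∈ S) (X : ℕ → E) (t : ℕ → ℝ) (n : ℕ)
    (hX : ∀ i ≤ n, X i ∈ S) (ht : ∀ i ≤ n, q * ε / 2 < t i)
    (h1 : ∀ i < n, t (i + 1) ≤ t i - ‖X (i + 1) - X i‖ ^ 2 / (2 * lam))
    (h2 : ∀ i < n, t (i + 1) ≤ f (X (i + 1)) - f (X i) - ⟪f' (X i), X (i + 1) - X i⟫)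
    (h0 : t 0 ≤ f (X 0) - f c - ⟪f' c, X 0 - c⟫ - q / (2 * lam) * ‖X 0 - c‖ ^ 2)
    (B N : ℝ) (hN : N = (n : ℝ) + 1)
    (hB : B = 8 + 12 * Real.log (1 + L ^ 2 * D ^ 2 * N / (16 * M ^ 2))) :
    q ^ 2 * N * ε ≤ 2 * lam * (M ^ 2 + ε * L) * B := by
  by_contra hcon
  push Not at hcon
  set δ := q * ε / 2 with hδ
  have hδ0 : 0 < δ := by positivity
  -- telescoping of the potential
  have htel : ∀ k : ℕ, k ≤ n → (k : ℝ) - 1 / 9 ≤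
      64 / 9 * (lam * M ^ 2) * (1 / t k - 1 / t 0)
        + (2 + 56 / 9 * (lam * L)) * (Real.log (t 0) - Real.log (t k)) := by
    intro k
    induction k using Nat.twoStepInduction with
    | zero => intro _; norm_num
    | one =>
      intro hk
      have hd := upb_descent f f' S hS M L horacle hhybrid (X 0) (X 1) (hX 0 (by omega)) (hX 1 hk)
      have a1 := h1 0 (by omega)
      have a2 := h2 0 (by omega)
      have := upb_gain_single lam M L (t 0) (t 1) ‖X 1 - X 0‖ hlam hL
        (hδ0.trans (ht 1 hk)) (by simpa using by linarith) (by simpa using a2.trans hd)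
      push_cast; linarith
    | more k ih _ =>
      intro hk
      have ih := ih (by omega)
      have a1 := h1 k (by omega)
      have a2 := h2 k (by omega)
      have b1 := h1 (k + 1) (by omega)
      have b2 := h2 (k + 1) (by omega)
      set r1 := ‖X (k + 1) - X k‖ with hr1
      set r2 := ‖X (k + 1 + 1) - X (k + 1)‖ with hr2
      have hRR : (Real.sqrt (r1 ^ 2 + r2 ^ 2)) ^ 2 = r1 ^ 2 + r2 ^ 2 :=
        Real.sq_sqrt (by positivity)
      have h3 := upb_three_point f f' S M L hM.le hL horacle hhybrid (X k) (X (k + 1))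
        (X (k + 1 + 1)) (hX _ (by omega)) (hX _ (by omega)) (hX _ hk)
        (Real.sqrt (r1 ^ 2 + r2 ^ 2)) (Real.sqrt_nonneg _) hRR
      have hr2n : 0 ≤ r2 ^ 2 / (2 * lam) := by positivity
      have := upb_gain_pair lam M L (t k) (t (k + 1 + 1)) (Real.sqrt (r1 ^ 2 + r2 ^ 2)) hlam hL
        (hδ0.trans (ht _ hk)) (by rw [hRR, add_div]; linarith) (by linarith)
      show ((k + 2 : ℕ) : ℝ) - 1 / 9 ≤
        64 / 9 * (lam * M ^ 2) * (1 / t (k + 1 + 1) - 1 / t 0)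
        + (2 + 56 / 9 * (lam * L)) * (Real.log (t 0) - Real.log (t (k + 1 + 1)))
      push_cast
      linarith
  have hn := htel n le_rfl
  have ht0 := ht 0 (Nat.zero_le _)
  have htn := ht n le_rfl
  have ht00 : 0 < t 0 := hδ0.trans ht0
  -- replace t n by δ
  have hn2 : (n : ℝ) - 1 / 9 ≤
      64 / 9 * (lam * M ^ 2) * (1 / δ - 1 / t 0)
        + (2 + 56 / 9 * (lam * L)) * (Real.log (t 0) - Real.log δ) := by
    refine hn.trans ?_
    have e1 : 1 / t n ≤ 1 / δ := one_div_le_one_div_of_le hδ0 htn.le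
    have e2 : Real.log δ ≤ Real.log (t n) := Real.log_le_log hδ0 htn.le
    have e3 : 0 ≤ 64 / 9 * (lam * M ^ 2) := by positivity
    have e4 : 0 ≤ 2 + 56 / 9 * (lam * L) := by positivity
    exact add_le_add (mul_le_mul_of_nonneg_left (by linarith) e3)
      (mul_le_mul_of_nonneg_left (by linarith) e4)
  set Λ := t 0 / δ with hΛ
  have hΛ1 : 1 < Λ := by rw [hΛ, lt_div_iff₀ hδ0]; linarith
  have ht0Λ : t 0 = Λ * δ := by rw [hΛ]; field_simp
  set μ := lam * M ^ 2 / (δ * q) with hμ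
  set ν := lam * L / q with hν
  set w := L * D / M with hw
  have hμ0 : 0 < μ := by positivity
  have hν0 : 0 ≤ ν := by positivity
  have hw0 : 0 ≤ w := by positivity
  have hN0 : 0 ≤ N := by rw [hN]; positivity
  have hlΛ : Real.log (t 0) - Real.log δ = Real.log Λ := by
    rw [hΛ, Real.log_div ht00.ne' hδ0.ne']
  have hlΛ0 : 0 ≤ Real.log Λ := Real.log_nonneg hΛ1.le
  have hn3 : N ≤ 10 / 9 + 64 / 9 * μ * (1 - 1 / Λ) + (2 + 56 / 9 * ν) * Real.log Λ := by
    rw [hlΛ] at hn2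
    have e1 : 64 / 9 * (lam * M ^ 2) * (1 / δ - 1 / t 0) = 64 / 9 * (μ * q) * (1 - 1 / Λ) := by
      rw [ht0Λ, hμ]; field_simp
    have e2 : lam * L = ν * q := by rw [hν]; field_simp
    rw [e1, e2] at hn2
    have e3 : 0 ≤ 1 - 1 / Λ := by
      rw [sub_nonneg, div_le_one (by linarith)]; exact hΛ1.le
    have e4 : μ * q ≤ μ := by nlinarith
    have e5 : ν * q ≤ ν := by nlinarith
    have e6 : 64 / 9 * (μ * q) * (1 - 1 / Λ) ≤ 64 / 9 * μ * (1 - 1 / Λ) := by gcongr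
    have e7 : (2 + 56 / 9 * (ν * q)) * Real.log Λ ≤ (2 + 56 / 9 * ν) * Real.log Λ := by gcongr
    rw [hN]; linarith
  -- initial gap
  have hd := upb_descent f f' S hS M L horacle hhybrid c (X 0) hc (hX 0 (Nat.zero_le _))
  set d := ‖X 0 - c‖ with hdd
  have hd0 : 0 ≤ d := norm_nonneg _
  have hdD : d ≤ D := hdiam _ (hX 0 (Nat.zero_le _)) _ hc
  have hin : t 0 ≤ 2 * M * d + L * d ^ 2 / 2 - q / (2 * lam) * d ^ 2 := by linarith
  have hb1 : Λ * (1 - ν) ≤ 2 * μ := by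
    rcases le_total 1 ν with hge | hle
    · nlinarith
    · -- (1-ν) t0 ≤ 2 lam M^2 / q
      have e1 : t 0 ≤ 2 * M * d - q / (2 * lam) * (1 - ν) * d ^ 2 := by
        have : q / (2 * lam) * (1 - ν) * d ^ 2 = q / (2 * lam) * d ^ 2 - L * d ^ 2 / 2 := by
          rw [hν]; field_simp
        linarith
      have e2 : (1 - ν) * (2 * M * d - q / (2 * lam) * (1 - ν) * d ^ 2) ≤ 2 * lam * M ^ 2 / q := by
        have : 2 * lam * M ^ 2 / q - (1 - ν) * (2 * M * d - q / (2 * lam) * (1 - ν) * d ^ 2)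
            = (2 * lam * M - q * (1 - ν) * d) ^ 2 / (2 * lam * q) := by
          field_simp; ring
        have h0 : 0 ≤ (2 * lam * M - q * (1 - ν) * d) ^ 2 / (2 * lam * q) := by positivity
        linarith
      have e3 := mul_le_mul_of_nonneg_left e1 (sub_nonneg.2 hle)
      have e4 : δ * (2 * μ) = 2 * lam * M ^ 2 / q := by rw [hμ]; field_simp
      have e5 : δ * (Λ * (1 - ν)) ≤ δ * (2 * μ) := by
        rw [e4]; rw [ht0Λ] at e3; linarith
      exact le_of_mul_le_mul_left e5 hδ0
  have hb2 : ν * Λ ≤ μ * (2 * w + w ^ 2 / 2) := by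
    have e1 : t 0 ≤ 2 * M * D + L * D ^ 2 / 2 := by
      have : 0 ≤ q / (2 * lam) * d ^ 2 := by positivity
      have h3 : 2 * M * d ≤ 2 * M * D := by gcongr
      have h4 : L * d ^ 2 / 2 ≤ L * D ^ 2 / 2 := by gcongr
      linarith
    have e2 : μ * (2 * w + w ^ 2 / 2) = ν * ((2 * M * D + L * D ^ 2 / 2) / δ) := by
      rw [hμ, hν, hw]; field_simp
    rw [e2, hΛ]
    gcongr
  have hB' : B = 8 + 12 * Real.log (1 + w ^ 2 * N / 16) := by
    rw [hB]; congr 4; rw [hw]; field_simp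
  have hB0 : 0 < B := by
    have : 0 ≤ Real.log (1 + w ^ 2 * N / 16) := Real.log_nonneg (by
      have : 0 ≤ w ^ 2 * N / 16 := by positivity
      linarith)
    rw [hB']; linarith
  have hbig : B * (μ + 2 * ν) < N := by
    have e1 : B * (μ + 2 * (ν / q)) < N := by
      have e : B * (μ + 2 * (ν / q)) = 2 * lam * (M ^ 2 + ε * L) * B / (q ^ 2 * ε) := by
        rw [hμ, hν, hδ]; field_simp
      rw [e, div_lt_iff₀ (by positivity)]
      linarith
    have e2 : ν ≤ ν / q := by rw [le_div_iff₀ hq]; nlinarith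
    have e3 : B * (μ + 2 * ν) ≤ B * (μ + 2 * (ν / q)) := by gcongr
    linarith
  have := upb_num μ ν w Λ N B hμ0 hν0 hw0 hΛ1 hb1 hb2 hN0 hB' hbig.le
  linarith

end cyc


/-- Proposition `lem1:U-PB`(b),(c): lower bound on all stepsizes used by
U-PB and upper bound on the total number of reset updates. The execution of U-PB is
modeled by the sequence of inner iterations `j = 0, 1, 2, …` as in the complexity theorem;
a reset update occurs at iteration `j` iff `t j > (1−χ)ε̄/2` and `N j + 1 = N̄`. -/
theorem upb_stepsize_and_reset_bounds
    {n : ℕ} (f h : EuclideanSpace ℝ (Fin n) → ℝ)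
    (domf domh : Set (EuclideanSpace ℝ (Fin n)))
    (f' : EuclideanSpace ℝ (Fin n) → EuclideanSpace ℝ (Fin n))
    (Mf Lf : ℝ) (hMf : 0 < Mf) (hLf : 0 ≤ Lf)
    (hsub : domh ⊆ domf)
    (hfconv : ConvexOn ℝ domf f) (hhconv : ConvexOn ℝ domh h)
    (hflsc : LowerSemicontinuousOn f domf) (hhlsc : LowerSemicontinuousOn h domh)
    (horacle : ∀ x ∈ domh, ∀ u ∈ domf, f x + ⟪f' x, u - x⟫ ≤ f u)
    (hhybrid : ∀ x ∈ domh, ∀ y ∈ domh, ‖f' x - f' y‖ ≤ 2 * Mf + Lf * ‖x - y‖)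
    (D : ℝ) (hD : 0 < D) (hdiam : ∀ a ∈ domh, ∀ b ∈ domh, ‖a - b‖ ≤ D)
    (Xstar : Set (EuclideanSpace ℝ (Fin n)))
    (hXstar : Xstar = {z | z ∈ domh ∧ ∀ u ∈ domh, f z + h z ≤ f u + h u})
    (hXne : Xstar.Nonempty)
    -- inputs of U-PB
    (x0 : EuclideanSpace ℝ (Fin n)) (hx0 : x0 ∈ domh)
    (χ lam0 ε : ℝ) (Nbar : ℕ)
    (hχ0 : 0 ≤ χ) (hχ1 : χ < 1) (hlam0 : 0 < lam0) (hε : 0 < ε) (hNbar : 1 ≤ Nbar)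
    -- the execution of U-PB
    (F : ℕ → EuclideanSpace ℝ (Fin n) → ℝ)
    (x c : ℕ → EuclideanSpace ℝ (Fin n))
    (lam : ℕ → ℝ) (N : ℕ → ℕ) (φb t : ℕ → ℝ)
    (hc0 : c 0 = x0) (hl0 : lam 0 = lam0) (hN0 : N 0 = 0)
    (hFconv : ∀ j, ConvexOn ℝ domf (F j))
    (hFle : ∀ j, ∀ u ∈ domf, F j u ≤ f u)
    (hFlow : ∀ j, N j = 0 → ∀ u ∈ domf, f (c j) + ⟪f' (c j), u - c j⟫ ≤ F j u)
    (hcdom : ∀ j, c j ∈ domh) (hxdom : ∀ j, x j ∈ domh)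
    (hxmin : ∀ j, ∀ u ∈ domh,
      F j (x j) + h (x j) + ‖x j - c j‖ ^ 2 / (2 * lam j)
        ≤ F j u + h u + ‖u - c j‖ ^ 2 / (2 * lam j))
    (hφb0 : ∀ j, N j = 0 →
      φb j = f (x j) + h (x j) + χ / (2 * lam j) * ‖x j - c j‖ ^ 2)
    (hφbrec : ∀ j, N j ≠ 0 →
      φb j = min (φb (j - 1)) (f (x j) + h (x j) + χ / (2 * lam j) * ‖x j - c j‖ ^ 2))
    (ht : ∀ j, t j = φb j - (F j (x j) + h (x j) + ‖x j - c j‖ ^ 2 / (2 * lam j)))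
    (hnull : ∀ j, (1 - χ) * ε / 2 < t j → N j + 1 < Nbar →
      c (j + 1) = c j ∧ lam (j + 1) = lam j ∧ N (j + 1) = N j + 1 ∧
      ∃ fbar : EuclideanSpace ℝ (Fin n) → ℝ,
        ConvexOn ℝ domf fbar ∧ (∀ u ∈ domf, fbar u ≤ f u) ∧
        fbar (x j) = F j (x j) ∧
        (∀ u ∈ domh, fbar (x j) + h (x j) + ‖x j - c j‖ ^ 2 / (2 * lam j)
          ≤ fbar u + h u + ‖u - c j‖ ^ 2 / (2 * lam j)) ∧
        (∀ u ∈ domf, fbar u ≤ F (j + 1) u) ∧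
        (∀ u ∈ domf, f (x j) + ⟪f' (x j), u - x j⟫ ≤ F (j + 1) u))
    (hreset : ∀ j, (1 - χ) * ε / 2 < t j → N j + 1 = Nbar →
      c (j + 1) = c j ∧ lam (j + 1) = lam j / 2 ∧ N (j + 1) = 0)
    (hserious : ∀ j, t j ≤ (1 - χ) * ε / 2 →
      c (j + 1) = x j ∧ lam (j + 1) = lam j ∧ N (j + 1) = 0)
    (B U : ℝ)
    (hB : B = 8 + 12 * Real.log (1 + Lf ^ 2 * D ^ 2 * Nbar / (16 * Mf ^ 2)))
    (hU : U = 4 * (Mf ^ 2 + ε * Lf) * B / (1 - χ) ^ 2 + Nbar * ε / lam0) :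
    (∀ j, min ((1 - χ) ^ 2 * Nbar * ε / (4 * (Mf ^ 2 + ε * Lf) * B)) lam0 ≤ lam j ∧
      Nbar * ε / U ≤ lam j) ∧
    (∀ S : Finset ℕ, (∀ j ∈ S, (1 - χ) * ε / 2 < t j ∧ N j + 1 = Nbar) →
      (S.card : ℝ) ≤ (⌈2 * Real.log (lam0 * U / (Nbar * ε))⌉ : ℝ)) := by
  have hχq : 0 < 1 - χ := by linarith
  have hNb0 : (0 : ℝ) < Nbar := by exact_mod_cast hNbar
  have hB0 : 0 < B := by
    have : 0 ≤ Real.log (1 + Lf ^ 2 * D ^ 2 * Nbar / (16 * Mf ^ 2)) := Real.log_nonneg (by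
      have : 0 ≤ Lf ^ 2 * D ^ 2 * Nbar / (16 * Mf ^ 2) := by positivity
      linarith)
    rw [hB]; linarith
  have hΓ : 0 < Mf ^ 2 + ε * Lf := by positivity
  have horacle' : ∀ x ∈ domh, ∀ u ∈ domh, f x + ⟪f' x, u - x⟫ ≤ f u :=
    fun x hx u hu => horacle x hx u (hsub hu)
  -- positivity of stepsizes and range of the inner counter
  have hNlt : ∀ j, N j + 1 ≤ Nbar := by
    intro j
    induction j with
    | zero => rw [hN0]; omega
    | succ j ih =>
      rcases le_or_gt (t j) ((1 - χ) * ε / 2) with hs | hs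
      · rw [(hserious j hs).2.2]; omega
      · rcases ih.lt_or_eq with hl | hl
        · rw [(hnull j hs hl).2.2.1]; omega
        · rw [(hreset j hs hl).2.2]; omega
  have hlampos : ∀ j, 0 < lam j := by
    intro j
    induction j with
    | zero => rw [hl0]; exact hlam0
    | succ j ih =>
      rcases le_or_gt (t j) ((1 - χ) * ε / 2) with hs | hs
      · rw [(hserious j hs).2.1]; exact ih
      · rcases (hNlt j).lt_or_eq with hl | hl
        · rw [(hnull j hs hl).2.1]; exact ih
        · rw [(hreset j hs hl).2.1]; linarith
  -- structure of the current cycle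
  have hcyc : ∀ j, ∃ s, s + N j = j ∧ N s = 0 ∧
      (∀ i ≤ N j, N (s + i) = i ∧ c (s + i) = c s ∧ lam (s + i) = lam s) ∧
      (∀ i < N j, (1 - χ) * ε / 2 < t (s + i)) := by
    intro j
    induction j with
    | zero =>
      refine ⟨0, by rw [hN0], hN0, ?_, ?_⟩
      · intro i hi
        have : i = 0 := by omega
        subst this; simp [hN0]
      · intro i hi; omega
    | succ j ih =>
      have hnew : N (j + 1) = 0 → ∃ s, s + N (j + 1) = j + 1 ∧ N s = 0 ∧
          (∀ i ≤ N (j + 1), N (s + i) = i ∧ c (s + i) = c s ∧ lam (s + i) = lam s) ∧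
          (∀ i < N (j + 1), (1 - χ) * ε / 2 < t (s + i)) := by
        intro h0
        refine ⟨j + 1, by rw [h0], h0, ?_, ?_⟩
        · intro i hi
          have : i = 0 := by omega
          subst this; simp [h0]
        · intro i hi; omega
      rcases le_or_gt (t j) ((1 - χ) * ε / 2) with hs | hs
      · exact hnew (hserious j hs).2.2
      · rcases (hNlt j).lt_or_eq with hl | hl
        · obtain ⟨s, hs1, hs2, hs3, hs4⟩ := ih
          obtain ⟨e1, e2, e3, _⟩ := hnull j hs hl
          refine ⟨s, by omega, hs2, ?_, ?_⟩
          · intro i hi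
            rcases Nat.lt_or_ge (N j) i with hi2 | hi2
            · have hij : s + i = j + 1 := by omega
              have hlast := hs3 (N j) le_rfl
              rw [hs1] at hlast
              rw [hij, e1, e2, e3]
              exact ⟨by omega, hlast.2.1, hlast.2.2⟩
            · exact hs3 i hi2
          · intro i hi
            rcases Nat.lt_or_ge i (N j) with hi2 | hi2
            · exact hs4 i hi2
            · have hij : s + i = j := by omega
              rw [hij]; exact hs
        · exact hnew (hreset j hs hl).2.2
  -- stepsize at a reset is large
  have hkey : ∀ j, (1 - χ) * ε / 2 < t j → N j + 1 = Nbar →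
      (1 - χ) ^ 2 * Nbar * ε ≤ 2 * lam j * (Mf ^ 2 + ε * Lf) * B := by
    intro j hj hjN
    obtain ⟨s, hs1, hs2, hs3, hs4⟩ := hcyc j
    have hlast := hs3 (N j) le_rfl
    rw [hs1] at hlast
    have htall : ∀ i ≤ N j, (1 - χ) * ε / 2 < t (s + i) := by
      intro i hi
      rcases hi.lt_or_eq with h1 | h1
      · exact hs4 i h1
      · rw [h1, hs1]; exact hj
    rw [hlast.2.2]
    have hls := hlampos s
    apply upb_cycle f f' domh hhconv.1 Mf Lf hMf hLf horacle' hhybrid D hD hdiam (1 - χ) ε (lam s)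
      hχq (by linarith) hε hls (c s) (hcdom s) (fun i => x (s + i)) (fun i => t (s + i)) (N j)
      (fun i _ => hxdom _) htall ?_ ?_ ?_ B (Nbar : ℝ) (by rw [← hjN]; push_cast; rfl) hB
    · intro i hi
      obtain ⟨a1, a2, a3⟩ := hs3 i hi.le
      obtain ⟨b1, b2, b3⟩ := hs3 (i + 1) hi
      obtain ⟨_, _, _, fbar, g1, g2, g3, g4, g5, g6⟩ := hnull (s + i) (hs4 i hi) (by omega)
      have hgr := upb_prox_growth (fun u => fbar u + h u) domh
        ((g1.subset hsub hhconv.1).add hhconv) (c s) (x (s + i)) (x (s + (i + 1))) (lam s) hls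
        (hxdom _) (hxdom _) (by rw [a2, a3] at g4; exact g4)
      have hg5 := g5 _ (hsub (hxdom (s + (i + 1))))
      have hmin : φb (s + (i + 1)) ≤ φb (s + i) := by
        rw [hφbrec (s + (i + 1)) (by omega)]
        exact min_le_left _ _
      have t1 := ht (s + i)
      have t2 := ht (s + (i + 1))
      rw [a2, a3] at t1
      rw [b2, b3] at t2
      have e : s + i + 1 = s + (i + 1) := by omega
      rw [e] at hg5
      rw [g3] at hgr
      linarith
    · intro i hi
      obtain ⟨b1, b2, b3⟩ := hs3 (i + 1) hi
      obtain ⟨_, _, _, fbar, g1, g2, g3, g4, g5, g6⟩ := hnull (s + i) (hs4 i hi)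
        (by have := (hs3 i hi.le).1; omega)
      have hg6 := g6 _ (hsub (hxdom (s + (i + 1))))
      have hmin : φb (s + (i + 1)) ≤ f (x (s + (i + 1))) + h (x (s + (i + 1)))
          + χ / (2 * lam s) * ‖x (s + (i + 1)) - c s‖ ^ 2 := by
        rw [hφbrec (s + (i + 1)) (by omega), b2, b3]
        exact min_le_right _ _
      have t2 := ht (s + (i + 1))
      rw [b2, b3] at t2
      have e : s + i + 1 = s + (i + 1) := by omega
      rw [e] at hg6
      have hnn : 0 ≤ (1 - χ) * (‖x (s + (i + 1)) - c s‖ ^ 2 / (2 * lam s)) := by positivity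
      have heq : χ / (2 * lam s) * ‖x (s + (i + 1)) - c s‖ ^ 2
          = χ * (‖x (s + (i + 1)) - c s‖ ^ 2 / (2 * lam s)) := by ring
      rw [heq] at hmin
      linarith
    · have hfl := hFlow s hs2 _ (hsub (hxdom s))
      have t0 := ht s
      rw [hφb0 s hs2] at t0
      simp only [add_zero]
      have heq : (1 - χ) / (2 * lam s) * ‖x s - c s‖ ^ 2
          = ‖x s - c s‖ ^ 2 / (2 * lam s) - χ / (2 * lam s) * ‖x s - c s‖ ^ 2 := by ring
      rw [heq]
      linarith
  set b1 := (1 - χ) ^ 2 * Nbar * ε / (4 * (Mf ^ 2 + ε * Lf) * B) with hb1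
  have hb1pos : 0 < b1 := by positivity
  have hmin : ∀ j, min b1 lam0 ≤ lam j := by
    intro j
    induction j with
    | zero => rw [hl0]; exact min_le_right _ _
    | succ j ih =>
      rcases le_or_gt (t j) ((1 - χ) * ε / 2) with hs | hs
      · rw [(hserious j hs).2.1]; exact ih
      · rcases (hNlt j).lt_or_eq with hl | hl
        · rw [(hnull j hs hl).2.1]; exact ih
        · rw [(hreset j hs hl).2.1]
          refine (min_le_left _ _).trans ?_
          rw [hb1, div_le_iff₀ (by positivity)]
          linarith [hkey j hs hl]
  have hNε : 0 < Nbar * ε := by positivity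
  have hUpos : 0 < U := by rw [hU]; positivity
  have hUmin : Nbar * ε / U ≤ min b1 lam0 := by
    have p1 : 0 ≤ 4 * (Mf ^ 2 + ε * Lf) * B / (1 - χ) ^ 2 := by positivity
    have p2 : 0 ≤ Nbar * ε / lam0 := by positivity
    apply le_min
    · rw [div_le_iff₀ hUpos, hU]
      have : b1 * (4 * (Mf ^ 2 + ε * Lf) * B / (1 - χ) ^ 2) = Nbar * ε := by
        rw [hb1]; field_simp
      nlinarith [mul_nonneg hb1pos.le p2]
    · rw [div_le_iff₀ hUpos, hU]
      have : lam0 * (Nbar * ε / lam0) = Nbar * ε := by field_simp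
      nlinarith [mul_nonneg hlam0.le p1]
  refine ⟨fun j => ⟨hmin j, hUmin.trans (hmin j)⟩, ?_⟩
  intro S hS
  classical
  have hcount : ∀ j, lam j * 2 ^ ((Finset.range j).filter
      (fun i => (1 - χ) * ε / 2 < t i ∧ N i + 1 = Nbar)).card = lam0 := by
    intro j
    induction j with
    | zero => simp [hl0]
    | succ j ih =>
      rw [Finset.range_add_one, Finset.filter_insert]
      rcases le_or_gt (t j) ((1 - χ) * ε / 2) with hs | hs
      · rw [if_neg (fun hh => absurd hh.1 (not_lt.2 hs)), (hserious j hs).2.1]; exact ih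
      · rcases (hNlt j).lt_or_eq with hl | hl
        · rw [if_neg (fun hh => absurd hh.2 hl.ne), (hnull j hs hl).2.1]; exact ih
        · rw [if_pos ⟨hs, hl⟩, Finset.card_insert_of_notMem (by simp), (hreset j hs hl).2.1,
            pow_succ]
          linarith
  obtain ⟨m, hm⟩ : ∃ m, S ⊆ Finset.range m := by
    refine ⟨S.sup id + 1, fun i hi => ?_⟩
    rw [Finset.mem_range]
    exact Nat.lt_succ_of_le (Finset.le_sup (f := id) hi)
  have hcard : S.card ≤ ((Finset.range m).filter
      (fun i => (1 - χ) * ε / 2 < t i ∧ N i + 1 = Nbar)).card := by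
    apply Finset.card_le_card
    intro i hi
    rw [Finset.mem_filter]
    exact ⟨hm hi, hS i hi⟩
  have hpow : (2 : ℝ) ^ S.card ≤ lam0 * U / (Nbar * ε) := by
    have e1 : (2 : ℝ) ^ S.card ≤ 2 ^ ((Finset.range m).filter
      (fun i => (1 - χ) * ε / 2 < t i ∧ N i + 1 = Nbar)).card :=
      pow_le_pow_right₀ (by norm_num) hcard
    have e2 := hUmin.trans (hmin m)
    have e3 := hcount m
    have e4 : Nbar * ε / U * 2 ^ S.card ≤ lam0 := by
      rw [← e3]
      exact mul_le_mul e2 e1 (by positivity) (hlampos m).le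
    rw [le_div_iff₀ hNε]
    have e5 := mul_le_mul_of_nonneg_right e4 hUpos.le
    have e6 : Nbar * ε / U * 2 ^ S.card * U = 2 ^ S.card * (Nbar * ε) := by field_simp
    linarith
  have hlog := Real.log_le_log (by positivity) hpow
  rw [Real.log_pow] at hlog
  have hl2 := Real.log_two_gt_d9
  refine le_trans ?_ (Int.le_ceil _)
  have hSn : (0 : ℝ) ≤ S.card := Nat.cast_nonneg _
  nlinarith
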